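/- Let q = ux + 2 + 2g, z = q² g⁻¹, s = xv + uy + (−(1/2)ux + g − 1)ζ − 2(1 + g), ω = q g⁻¹ s and θ = s² g⁻¹, all elements of D. Then the center of D equals the k-subalgebra generated by z, ω, θ, and this center is isomorphic as a k-algebra to k[X,Y,Z]/(XZ − Y²). -/

import Mathlib

open FreeAlgebra

/-- Generators of the double of the Jordan plane. -/
inductive JGen : Type
  | u | v | zeta | g | ginv | x | y

variable (k : Type) [Field k] [IsAlgClosed k] [CharZero k]

/-- The defining relations of the double of the Jordan plane. -/
inductive JRel : FreeAlgebra k JGen → FreeAlgebra k JGen → Prop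
  | gginv : JRel (ι k .g * ι k .ginv) 1
  | ginvg : JRel (ι k .ginv * ι k .g) 1
  | zg : JRel (ι k .zeta * ι k .g) (ι k .g * ι k .zeta)
  | gx : JRel (ι k .g * ι k .x) (ι k .x * ι k .g)
  | gy : JRel (ι k .g * ι k .y) (ι k .y * ι k .g + ι k .x * ι k .g)
  | zy : JRel (ι k .zeta * ι k .y) (ι k .y * ι k .zeta + ι k .y)
  | zx : JRel (ι k .zeta * ι k .x) (ι k .x * ι k .zeta + ι k .x)
  | ug : JRel (ι k .u * ι k .g) (ι k .g * ι k .u)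
  | vg : JRel (ι k .v * ι k .g) (ι k .g * ι k .v + ι k .g * ι k .u)
  | vz : JRel (ι k .v * ι k .zeta) (ι k .zeta * ι k .v + ι k .v)
  | uz : JRel (ι k .u * ι k .zeta) (ι k .zeta * ι k .u + ι k .u)
  | yx : JRel (ι k .y * ι k .x) (ι k .x * ι k .y - (1/2 : k) • (ι k .x * ι k .x))
  | vu : JRel (ι k .v * ι k .u) (ι k .u * ι k .v - (1/2 : k) • (ι k .u * ι k .u))
  | ux : JRel (ι k .u * ι k .x) (ι k .x * ι k .u)
  | vx : JRel (ι k .v * ι k .x) (ι k .x * ι k .v + (1 - ι k .g) + ι k .x * ι k .u)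
  | uy : JRel (ι k .u * ι k .y) (ι k .y * ι k .u + (1 - ι k .g))
  | vy : JRel (ι k .v * ι k .y) (ι k .y * ι k .v - ι k .g * ι k .zeta + ι k .y * ι k .u)

/-- The double of the Jordan plane, as the presented algebra. -/
def D : Type := RingQuot (JRel k)

noncomputable instance : Ring (D k) := inferInstanceAs (Ring (RingQuot (JRel k)))
noncomputable instance : Algebra k (D k) := inferInstanceAs (Algebra k (RingQuot (JRel k)))

/-- The canonical projection from the free algebra onto `D`. -/
noncomputable def Dmk : FreeAlgebra k JGen →ₐ[k] D k := RingQuot.mkAlgHom k (JRel k)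

noncomputable def DU : D k := Dmk k (ι k .u)
noncomputable def DV : D k := Dmk k (ι k .v)
noncomputable def DZ : D k := Dmk k (ι k .zeta)
noncomputable def DG : D k := Dmk k (ι k .g)
noncomputable def DGinv : D k := Dmk k (ι k .ginv)
noncomputable def DX : D k := Dmk k (ι k .x)
noncomputable def DY : D k := Dmk k (ι k .y)

set_option synthInstance.maxHeartbeats 1000000
set_option maxHeartbeats 2000000

/-!
Let `D` act on `K[x, x⁻¹, g, g⁻¹, q, s]` so that `x`, `g`, `q` and `s` act by multiplication, `ζ`
acts as the degree in `x`, and `y` acts as `-x / 2` times the total degree in which `x`, `q`, `s`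
have degree `1` and `g` has degree `2`. The relations allow any element of `D` to be reordered into
a combination of the monomials `x ^ a * u ^ b * g ^ n * ζ ^ e * v ^ c * y ^ d`, and comparing
leading terms of the corresponding operators shows that the action is faithful.

A central element commutes with multiplication by `x`, `g`, `q` and `s`, hence acts as
multiplication by a single element; commuting with `ζ` and `y` then forces this element to have
degree zero for both gradings. The monomials of bidegree zero are the `g ^ (-n) * q ^ c * s ^ d`
with `c + d = 2 * n`, that is, the products of `z = q² g⁻¹`, `ω = q g⁻¹ s` and `θ = s² g⁻¹`, which
satisfy `z θ = ω²` and no further relation.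
-/

namespace JordanDouble

section OreExtension

variable {R A : Type*} [CommSemiring R] [Semiring A] [Algebra R A] {S : Set A} {t : A}

theorem toSubmodule_adjoin_singleton (t : A) :
    Subalgebra.toSubmodule (Algebra.adjoin R {t}) =
      Submodule.span R (Set.range fun n : ℕ ↦ t ^ n) := by
  rw [Algebra.adjoin_eq_span, ← Submonoid.powers_eq_closure, ← Submonoid.coe_powers]

theorem exists_mul_eq_mul_add_of_mem_adjoin
    (h : ∀ s ∈ S, ∃ p ∈ Algebra.adjoin R S, ∃ r ∈ Algebra.adjoin R S, t * s = p * t + r)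
    {b : A} (hb : b ∈ Algebra.adjoin R S) :
    ∃ p ∈ Algebra.adjoin R S, ∃ r ∈ Algebra.adjoin R S, t * b = p * t + r := by
  induction hb using Algebra.adjoin_induction with
  | mem s hs => exact h s hs
  | algebraMap c =>
    exact ⟨_, Subalgebra.algebraMap_mem _ c, 0, zero_mem _, by rw [← Algebra.commutes, add_zero]⟩
  | add b b' _ _ ih ih' =>
    obtain ⟨p, hp, r, hr, hb⟩ := ih
    obtain ⟨p', hp', r', hr', hb'⟩ := ih'
    exact ⟨p + p', add_mem hp hp', r + r', add_mem hr hr', by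
      rw [mul_add, hb, hb', add_mul, add_add_add_comm]⟩
  | mul b b' _ hmem' ih ih' =>
    obtain ⟨p, hp, r, hr, hb⟩ := ih
    obtain ⟨p', hp', r', hr', hb'⟩ := ih'
    exact ⟨p * p', mul_mem hp hp', p * r' + r * b', add_mem (mul_mem hp hr') (mul_mem hr hmem'), by
      rw [← mul_assoc, hb, add_mul, mul_assoc, hb', mul_add, add_assoc, ← mul_assoc]⟩

theorem toSubmodule_adjoin_insert
    (h : ∀ s ∈ S, ∃ p ∈ Algebra.adjoin R S, ∃ r ∈ Algebra.adjoin R S, t * s = p * t + r) :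
    Subalgebra.toSubmodule (Algebra.adjoin R (insert t S)) =
      Subalgebra.toSubmodule (Algebra.adjoin R S) *
        Subalgebra.toSubmodule (Algebra.adjoin R {t}) := by
  set W := Subalgebra.toSubmodule (Algebra.adjoin R S) *
    Subalgebra.toSubmodule (Algebra.adjoin R {t})
  have left_mul_mem {b w : A} (hb : b ∈ Algebra.adjoin R S) (hw : w ∈ W) : b * w ∈ W := by
    have := Submodule.mul_mem_mul ((Subalgebra.mem_toSubmodule _).2 hb) hw
    rwa [← mul_assoc, (Subalgebra.isIdempotentElem_toSubmodule _).eq] at this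
  have t_mul_mem {w : A} (hw : w ∈ W) : t * w ∈ W := by
    induction hw using Submodule.mul_induction_on' with
    | mem_mul_mem b hb c hc =>
      obtain ⟨p, hp, r, hr, hpr⟩ := exists_mul_eq_mul_add_of_mem_adjoin h hb
      rw [← mul_assoc, hpr, add_mul, mul_assoc]
      exact add_mem (Submodule.mul_mem_mul hp
        (Subalgebra.mul_mem _ (Algebra.self_mem_adjoin_singleton R t) hc))
        (Submodule.mul_mem_mul hr hc)
    | add w _ w' _ hw hw' => rw [mul_add]; exact add_mem hw hw'
  have adjoin_mul_mem {a : A} (ha : a ∈ Algebra.adjoin R (insert t S)) :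
      ∀ w ∈ W, a * w ∈ W := by
    induction ha using Algebra.adjoin_induction with
    | mem a ha =>
      rcases ha with rfl | ha
      · exact fun _ ↦ t_mul_mem
      · exact fun _ ↦ left_mul_mem (Algebra.subset_adjoin ha)
    | algebraMap c => exact fun _ ↦ left_mul_mem (Subalgebra.algebraMap_mem _ c)
    | add a a' _ _ iha iha' => exact fun w hw ↦ add_mul a a' w ▸ add_mem (iha w hw) (iha' w hw)
    | mul a a' _ _ iha iha' => exact fun w hw ↦ mul_assoc a a' w ▸ iha _ (iha' w hw)
  apply le_antisymm
  · have one_mem_W : 1 ∈ W :=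
      one_mul (1 : A) ▸ Submodule.mul_mem_mul (Subalgebra.one_mem _) (Subalgebra.one_mem _)
    exact fun a ha ↦ mul_one a ▸ adjoin_mul_mem ha 1 one_mem_W
  · exact Submodule.mul_le.2 fun b hb c hc ↦ Subalgebra.mul_mem _
      (Algebra.adjoin_mono (Set.subset_insert t S) hb)
      (Algebra.adjoin_mono (Set.singleton_subset_iff.2 (Set.mem_insert t S)) hc)

theorem toSubmodule_adjoin_insert_of_commute (h : ∀ s ∈ S, Commute t s) :
    Subalgebra.toSubmodule (Algebra.adjoin R (insert t S)) =
      Subalgebra.toSubmodule (Algebra.adjoin R S) *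
        Subalgebra.toSubmodule (Algebra.adjoin R {t}) :=
  toSubmodule_adjoin_insert fun s hs ↦
    ⟨s, Algebra.subset_adjoin hs, 0, zero_mem _, by rw [(h s hs).eq, add_zero]⟩

end OreExtension

section QuadricCone

open MvPolynomial

variable {R : Type*} [CommRing R]

theorem pow_mod_two_mul_pow_div_two {M : Type*} [Monoid M] (m : M) (n : ℕ) :
    m ^ (n % 2) * (m ^ 2) ^ (n / 2) = m ^ n := by
  rw [← pow_mul, ← pow_add, Nat.mod_add_div]

theorem span_monomials_sup_span_quadric :
    Submodule.span R (Set.range fun i : ℕ × Fin 2 × ℕ ↦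
        (X 0 ^ i.1 * X 1 ^ (i.2.1 : ℕ) * X 2 ^ i.2.2 : MvPolynomial (Fin 3) R)) ⊔
      (Ideal.span {(X 0 : MvPolynomial (Fin 3) R) * X 2 - X 1 ^ 2}).restrictScalars R = ⊤ := by
  refine top_unique ?_
  rw [← (basisMonomials (Fin 3) R).span_eq, Submodule.span_le,
    coe_basisMonomials]
  rintro _ ⟨n, rfl⟩
  -- Replace `X 1 ^ n 1` by `X 1 ^ (n 1 % 2) * (X 0 * X 2) ^ (n 1 / 2)`.
  set m := n 1 / 2
  have reduced : X 0 ^ (n 0 + m) * X 1 ^ (n 1 % 2) * X 2 ^ (n 2 + m) ∈ Submodule.span R (Set.range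
      fun i : ℕ × Fin 2 × ℕ ↦
        (X 0 ^ i.1 * X 1 ^ (i.2.1 : ℕ) * X 2 ^ i.2.2 : MvPolynomial (Fin 3) R)) :=
    Submodule.subset_span ⟨(n 0 + m, ⟨n 1 % 2, Nat.mod_lt _ two_pos⟩, n 2 + m), rfl⟩
  have remainder : X 0 ^ n 0 * X 1 ^ (n 1 % 2) * X 2 ^ n 2 * ((X 0 * X 2) ^ m - (X 1 ^ 2) ^ m) ∈
      Ideal.span {(X 0 : MvPolynomial (Fin 3) R) * X 2 - X 1 ^ 2} :=
    Ideal.mul_mem_left _ _ (Ideal.mem_span_singleton.2 (sub_dvd_pow_sub_pow _ _ m))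
  refine Submodule.mem_sup.2 ⟨_, reduced, _, neg_mem remainder, ?_⟩
  beta_reduce
  rw [monomial_eq, Finsupp.prod_fintype _ _ fun _ ↦ pow_zero _,
    Fin.prod_univ_three, C_1, ← pow_mod_two_mul_pow_div_two (X 1) (n 1)]
  ring

variable {A : Type*} [CommRing A] [Algebra R A] {a b c : A}

theorem ker_aeval_eq_span_quadric (habc : a * c = b ^ 2)
    (hli : LinearIndependent R fun i : ℕ × Fin 2 × ℕ ↦ a ^ i.1 * b ^ (i.2.1 : ℕ) * c ^ i.2.2) :
    RingHom.ker (aeval ![a, b, c] : MvPolynomial (Fin 3) R →ₐ[R] A) =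
      Ideal.span {(X 0 : MvPolynomial (Fin 3) R) * X 2 - X 1 ^ 2} := by
  have quadric_le : Ideal.span {(X 0 : MvPolynomial (Fin 3) R) * X 2 - X 1 ^ 2} ≤
      RingHom.ker (aeval ![a, b, c] : MvPolynomial (Fin 3) R →ₐ[R] A) := by
    simp [RingHom.mem_ker, habc]
  refine le_antisymm (fun p hp ↦ ?_) quadric_le
  obtain ⟨n, hn, r, hr, rfl⟩ := Submodule.mem_sup.1
    (span_monomials_sup_span_quadric (R := R) ▸ Submodule.mem_top (x := p))
  obtain ⟨w, rfl⟩ := Finsupp.mem_span_range_iff_exists_finsupp.1 hn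
  have aeval_normal_form : Finsupp.linearCombination R
      (fun i : ℕ × Fin 2 × ℕ ↦ a ^ i.1 * b ^ (i.2.1 : ℕ) * c ^ i.2.2) w = 0 := by
    rw [RingHom.mem_ker, map_add, RingHom.mem_ker.1 (quadric_le hr), add_zero] at hp
    simpa [Finsupp.linearCombination_apply, map_finsuppSum] using hp
  have hw : w = 0 := linearIndependent_iff.1 hli w aeval_normal_form
  simpa [hw] using hr

end QuadricCone

section MonomialOperators

open AddMonoidAlgebra

variable {R ι : Type*} [CommRing R]

theorem end_ext {S T : Module.End R (AddMonoidAlgebra R ι)}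
    (h : ∀ i, S (single i 1) = T (single i 1)) : S = T :=
  (basis ι R).ext fun i ↦ by rw [basis_apply, h]

theorem single_mem_supported {s : Set ι} {i : ι} (hi : i ∈ s) (r : R) :
    single i r ∈ supported R R s :=
  mem_supported.2 (Finsupp.single_mem_supported R r hi)

variable [AddCommMonoid ι]

variable (R) in
/-- Multiplication by the monomial of exponent `i`. -/
noncomputable def shift (i : ι) : Module.End R (AddMonoidAlgebra R ι) :=
  Algebra.lmul R _ (single i 1)

/-- The derivation that scales the monomial of exponent `i` by the additive weight `f i`. -/
noncomputable def weightDerivation (f : ι →+ R) : Module.End R (AddMonoidAlgebra R ι) :=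
  (basis ι R).constr R fun i ↦ single i (f i)

theorem shift_single (i j : ι) (r : R) : shift R i (single j r) = single (i + j) r := by
  rw [shift, Algebra.coe_lmul_eq_mul, LinearMap.mul_apply', single_mul_single, one_mul]

theorem shift_mul_shift (i j : ι) : shift R i * shift R j = shift R (i + j) := by
  rw [shift, shift, ← map_mul, single_mul_single, one_mul, shift]

theorem shift_zero : shift R (0 : ι) = 1 := by
  rw [shift, ← one_def, map_one]

theorem shift_pow (i : ι) (n : ℕ) : shift R i ^ n = shift R (n • i) := by
  rw [shift, ← map_pow, single_pow, one_pow, shift]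

theorem weightDerivation_single (f : ι →+ R) (i : ι) (r : R) :
    weightDerivation f (single i r) = single i (f i * r) := by
  have scaled : single i r = r • basis ι R i := by
    rw [basis_apply, smul_single, smul_eq_mul, mul_one]
  rw [scaled, map_smul, weightDerivation, Module.Basis.constr_basis, smul_single, smul_eq_mul,
    mul_comm]

theorem weightDerivation_single_one (f : ι →+ R) (i : ι) :
    weightDerivation f (single i 1) = f i • single i (1 : R) := by
  rw [weightDerivation_single, smul_single, smul_eq_mul]

theorem coeff_weightDerivation (f : ι →+ R) (v : AddMonoidAlgebra R ι) (i : ι) :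
    (weightDerivation f v).coeff i = f i * v.coeff i := by
  classical
  induction v using AddMonoidAlgebra.induction_linear with
  | zero => simp
  | add v w hv hw => simp [hv, hw, mul_add]
  | single j r =>
    rw [weightDerivation_single, coeff_single, coeff_single, Finsupp.single_apply,
      Finsupp.single_apply]
    split_ifs with hji
    · rw [hji]
    · rw [mul_zero]

theorem aeval_weightDerivation_single (f : ι →+ R) (p : Polynomial R) (i : ι) :
    Polynomial.aeval (weightDerivation f) p (single i 1) = single i (p.eval (f i)) := by
  induction p using Polynomial.induction_on' with
  | add p q hp hq => rw [map_add, LinearMap.add_apply, hp, hq, Polynomial.eval_add, single_add]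
  | monomial n r =>
    have pow_single : (weightDerivation f ^ n) (single i 1) = single i (f i ^ n) := by
      induction n with
      | zero => simp
      | succ n ih => rw [pow_succ', Module.End.mul_apply, ih, weightDerivation_single, ← pow_succ']
    rw [Polynomial.aeval_monomial, Polynomial.eval_monomial, ← Algebra.smul_def,
      LinearMap.smul_apply, pow_single, smul_single, smul_eq_mul]

theorem commute_shift_weightDerivation {f : ι →+ R} {i : ι} (hi : f i = 0) :
    Commute (shift R i) (weightDerivation f) :=
  end_ext fun j ↦ by
    simp only [Module.End.mul_apply, shift_single, weightDerivation_single, map_add, hi, zero_add]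

theorem commute_shift_shift (i j : ι) : Commute (shift R i) (shift R j) := by
  rw [Commute, SemiconjBy, shift_mul_shift, shift_mul_shift, add_comm]

theorem commute_shift_of_add_eq_zero {T : Module.End R (AddMonoidAlgebra R ι)} {i j : ι}
    (hi : Commute T (shift R i)) (hij : i + j = 0) : Commute T (shift R j) :=
  have shift_mul_shift_eq_one : shift R i * shift R j = 1 := by
    rw [shift_mul_shift, hij, shift_zero]
  Commute.units_inv_right (u := ⟨shift R i, shift R j, shift_mul_shift_eq_one,
    (commute_shift_shift j i).eq.trans shift_mul_shift_eq_one⟩) hi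

theorem eq_lmul_of_commute_shift {T : Module.End R (AddMonoidAlgebra R ι)}
    (h : ∀ i, Commute T (shift R i)) : T = Algebra.lmul R _ (T 1) :=
  end_ext fun i ↦ calc
    T (single i 1) = (T * shift R i) 1 := by
      rw [Module.End.mul_apply, one_def, shift_single, add_zero]
    _ = shift R i (T 1) := by rw [(h i).eq, Module.End.mul_apply]
    _ = Algebra.lmul R _ (T 1) (single i 1) := by
      rw [shift, Algebra.coe_lmul_eq_mul, LinearMap.mul_apply', LinearMap.mul_apply', mul_comm]

theorem mul_coeff_map_one_of_commute {T : Module.End R (AddMonoidAlgebra R ι)} {f : ι →+ R}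
    (h : Commute T (weightDerivation f)) (i : ι) : f i * (T 1).coeff i = 0 := by
  rw [← coeff_weightDerivation, ← Module.End.mul_apply, ← h.eq, Module.End.mul_apply, one_def,
    weightDerivation_single, map_zero, zero_mul, single_zero, map_zero, coeff_zero,
    Finsupp.zero_apply]

/-- Modulo monomials of smaller weight, `T` sends the monomial of exponent `i` to the monomial of
exponent `δ + i` with coefficient `c i`. -/
def HasLeadingTerm (wt : ι →+ ℕ) (T : Module.End R (AddMonoidAlgebra R ι)) (δ : ι) (c : ι → R) :
    Prop :=
  ∀ i, T (single i 1) - single (δ + i) (c i) ∈ supported R R {j | wt j < wt (δ + i)}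

theorem hasLeadingTerm_shift (wt : ι →+ ℕ) (δ : ι) :
    HasLeadingTerm wt (shift R δ) δ fun _ ↦ 1 := fun i ↦ by
  rw [shift_single, sub_self]
  exact zero_mem _

theorem hasLeadingTerm_aeval_weightDerivation (wt : ι →+ ℕ) (f : ι →+ R) (p : Polynomial R) :
    HasLeadingTerm wt (Polynomial.aeval (weightDerivation f) p) 0 fun i ↦ p.eval (f i) := fun i ↦ by
  rw [aeval_weightDerivation_single, zero_add, sub_self]
  exact zero_mem _

namespace HasLeadingTerm

variable {wt : ι →+ ℕ} {S T : Module.End R (AddMonoidAlgebra R ι)} {δ ε : ι} {c d : ι → R}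

theorem coeff_apply (hT : HasLeadingTerm wt T δ c) {i m : ι} (hm : wt (δ + i) ≤ wt m) :
    (T (single i 1)).coeff m = (single (δ + i) (c i)).coeff m := by
  have coeff_sub_eq_zero := mem_supported'.1 (hT i) m hm.not_gt
  rwa [coeff_sub, Finsupp.sub_apply, sub_eq_zero] at coeff_sub_eq_zero

theorem map_mem_supported (hT : HasLeadingTerm wt T δ c) {n : ℕ} {v : AddMonoidAlgebra R ι}
    (hv : v ∈ supported R R {j | wt j < n}) : T v ∈ supported R R {j | wt j < wt δ + n} := by
  rw [supported_eq_span_single] at hv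
  refine Submodule.span_induction ?_ ((map_zero T).symm ▸ zero_mem _)
    (fun v w _ _ hv hw ↦ map_add T v w ▸ add_mem hv hw)
    (fun r v _ hv ↦ map_smul T r v ▸ Submodule.smul_mem _ r hv) hv
  rintro _ ⟨i, hi : wt i < n, rfl⟩
  have wt_lt : wt (δ + i) < wt δ + n := by rw [map_add]; gcongr
  have leading_mem : single (δ + i) (c i) ∈ supported R R {j | wt j < wt δ + n} :=
    single_mem_supported (s := {j | wt j < wt δ + n}) wt_lt _
  rw [← sub_add_cancel (T (single i 1)) (single (δ + i) (c i))]
  exact add_mem (supported_mono (fun j (hj : wt j < _) ↦ hj.trans wt_lt) (hT i))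
    leading_mem

theorem mul (hT : HasLeadingTerm wt T δ c) (hS : HasLeadingTerm wt S ε d) :
    HasLeadingTerm wt (T * S) (δ + ε) fun i ↦ c (ε + i) * d i := fun i ↦ by
  have lower_S := hT.map_mem_supported (hS i)
  have lower_T := Submodule.smul_mem _ (d i) (hT (ε + i))
  have split : (T * S) (single i 1) - single (δ + ε + i) (c (ε + i) * d i) =
      T (S (single i 1) - single (ε + i) (d i)) +
        d i • (T (single (ε + i) 1) - single (δ + (ε + i)) (c (ε + i))) := by
    rw [smul_sub, ← map_smul, smul_single, smul_single, smul_eq_mul, smul_eq_mul, mul_one, map_sub,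
      Module.End.mul_apply, mul_comm, add_assoc, sub_add_sub_cancel]
  rw [split, add_assoc, map_add wt δ]
  rw [map_add wt δ] at lower_T
  exact add_mem lower_S lower_T

theorem pow (hT : HasLeadingTerm wt T δ c) (n : ℕ) :
    HasLeadingTerm wt (T ^ n) (n • δ) fun i ↦ ∏ t ∈ Finset.range n, c (t • δ + i) := by
  induction n with
  | zero => simpa [shift_zero] using hasLeadingTerm_shift (R := R) wt 0
  | succ n ih =>
    simp only [Finset.prod_range_succ_comm, succ_nsmul']
    exact pow_succ' T n ▸ hT.mul ih

end HasLeadingTerm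

end MonomialOperators

section Representation

open AddMonoidAlgebra

variable (K : Type) [Field K]

/-- The index `(a, b, c, d)` stands for the monomial `x ^ a * g ^ b * q ^ c * s ^ d`. -/
abbrev Exponent : Type := ℤ × ℤ × ℕ × ℕ

/-- The degree in `x` of a monomial. -/
noncomputable def xDegree : Exponent →+ K where
  toFun i := i.1
  map_zero' := by simp
  map_add' i j := by simp

/-- The degree of a monomial for which `x`, `q` and `s` have degree `1` and `g` has degree `2`. -/
noncomputable def eulerDegree : Exponent →+ K where
  toFun i := i.1 + 2 * i.2.1 + i.2.2.1 + i.2.2.2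
  map_zero' := by simp
  map_add' i j := by simp only [Prod.fst_add, Prod.snd_add]; push_cast; ring

theorem xDegree_apply (i : Exponent) : xDegree K i = i.1 := rfl

theorem eulerDegree_apply (i : Exponent) :
    eulerDegree K i = i.1 + 2 * i.2.1 + i.2.2.1 + i.2.2.2 := rfl

/-- The operators by which the generators act on `K[x, x⁻¹, g, g⁻¹, q, s]`: there `x`, `g` act by
multiplication, `ζ` is the degree in `x`, and `y` is `-x / 2` times the Euler derivation. The
formulas for `u` and `v` are forced by asking that `q` and `s` act by multiplication too. -/
noncomputable def action : JGen → Module.End K (AddMonoidAlgebra K Exponent)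
  | .x => shift K (1, 0, 0, 0)
  | .g => shift K (0, 1, 0, 0)
  | .ginv => shift K (0, -1, 0, 0)
  | .zeta => weightDerivation (xDegree K)
  | .y => -(1 / 2 : K) • (shift K (1, 0, 0, 0) * weightDerivation (eulerDegree K))
  | .u => shift K (-1, 0, 1, 0) - 2 * shift K (-1, 0, 0, 0) - 2 * shift K (-1, 1, 0, 0)
  | .v => shift K (-1, 0, 0, 1) +
      (1 / 2 : K) • (shift K (-1, 0, 1, 0) *
        (weightDerivation (eulerDegree K) + weightDerivation (xDegree K))) +
      shift K (-1, 0, 0, 0) * (2 - weightDerivation (eulerDegree K)) +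
      shift K (-1, 1, 0, 0) *
        (2 - weightDerivation (eulerDegree K) - 2 * weightDerivation (xDegree K))

variable [CharZero K]

theorem lift_action_eq_of_rel ⦃p r : FreeAlgebra K JGen⦄ (h : JRel K p r) :
    FreeAlgebra.lift K (action K) p = FreeAlgebra.lift K (action K) r := by
  cases h <;> refine end_ext fun ⟨a, b, c, d⟩ ↦ ?_ <;>
  simp only [map_mul, map_add, map_sub, map_one, map_smul, map_nsmul, FreeAlgebra.lift_ι_apply,
    action, Module.End.mul_apply, LinearMap.add_apply, LinearMap.sub_apply, LinearMap.smul_apply,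
    Module.End.one_apply, Module.End.ofNat_apply, shift_single, weightDerivation_single_one,
    xDegree_apply, eulerDegree_apply, Prod.mk_add_mk, zero_add, neg_add_cancel_left,
    add_neg_cancel_left] <;>
  push_cast <;>
  match_scalars <;> field_simp <;> ring

/-- The representation of `D` on `K[x, x⁻¹, g, g⁻¹, q, s]` given by `action`. -/
noncomputable def rep : D K →ₐ[K] Module.End K (AddMonoidAlgebra K Exponent) :=
  RingQuot.liftAlgHom K ⟨FreeAlgebra.lift K (action K), lift_action_eq_of_rel K⟩

theorem rep_Dmk_ι (i : JGen) : rep K (Dmk K (ι K i)) = action K i :=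
  (RingQuot.liftAlgHom_mkAlgHom_apply K _ (lift_action_eq_of_rel K) _).trans
    (FreeAlgebra.lift_ι_apply _ _)

end Representation

section CentralElements

open AddMonoidAlgebra

variable (K : Type) [Field K]

/-- The element `q` of the theorem; it acts as multiplication by the variable `q`. -/
noncomputable def q : D K := DU K * DX K + 2 + 2 * DG K

/-- The element `s` of the theorem; it acts as multiplication by the variable `s`. -/
noncomputable def s : D K :=
  DX K * DV K + DU K * DY K + (-((1 / 2 : K) • (DU K * DX K)) + DG K - 1) * DZ K - 2 * (1 + DG K)

/-- The central element `z` of the theorem. -/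
noncomputable def z : D K := q K ^ 2 * DGinv K

/-- The central element `ω` of the theorem. -/
noncomputable def ω : D K := q K * DGinv K * s K

/-- The central element `θ` of the theorem. -/
noncomputable def θ : D K := s K ^ 2 * DGinv K

variable [CharZero K]

theorem rep_q : rep K (q K) = shift K (0, 0, 1, 0) :=
  end_ext fun ⟨a, b, c, d⟩ ↦ by
    simp only [q, DU, DX, DG, map_mul, map_add, map_ofNat, rep_Dmk_ι, action,
      Module.End.mul_apply, LinearMap.add_apply, LinearMap.sub_apply, Module.End.ofNat_apply,
      shift_single, Prod.mk_add_mk, zero_add, neg_add_cancel_left]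
    module

theorem rep_s : rep K (s K) = shift K (0, 0, 0, 1) :=
  end_ext fun ⟨a, b, c, d⟩ ↦ by
    simp only [s, DU, DX, DG, DV, DY, DZ, map_mul, map_add, map_sub, map_neg, map_ofNat, map_one,
      map_smul, map_nsmul, rep_Dmk_ι, action, Module.End.mul_apply, LinearMap.add_apply,
      LinearMap.sub_apply, LinearMap.neg_apply, LinearMap.smul_apply, Module.End.ofNat_apply,
      Module.End.one_apply, shift_single, weightDerivation_single_one, xDegree_apply,
      eulerDegree_apply, Prod.mk_add_mk, zero_add, neg_add_cancel_left, add_neg_cancel_left]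
    match_scalars <;> field_simp <;> ring

theorem rep_z : rep K (z K) = shift K (0, -1, 2, 0) := by
  rw [z, map_mul, map_pow, rep_q, DGinv, rep_Dmk_ι, action, shift_pow, shift_mul_shift]; rfl

theorem rep_ω : rep K (ω K) = shift K (0, -1, 1, 1) := by
  rw [ω, map_mul, map_mul, rep_q, rep_s, DGinv, rep_Dmk_ι, action, shift_mul_shift,
    shift_mul_shift]; rfl

theorem rep_θ : rep K (θ K) = shift K (0, -1, 0, 2) := by
  rw [θ, map_mul, map_pow, rep_s, DGinv, rep_Dmk_ι, action, shift_pow, shift_mul_shift]; rfl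

end CentralElements

section Relations

variable (K : Type) [Field K]

theorem Dmk_eq_of_rel {p r : FreeAlgebra K JGen} (h : JRel K p r) : Dmk K p = Dmk K r :=
  RingQuot.mkAlgHom_rel K h

theorem DG_mul_DGinv : DG K * DGinv K = 1 := by
  simpa only [map_mul, map_one, DG, DGinv] using Dmk_eq_of_rel K .gginv

theorem DGinv_mul_DG : DGinv K * DG K = 1 := by
  simpa only [map_mul, map_one, DGinv, DG] using Dmk_eq_of_rel K .ginvg

theorem commute_DZ_DG : Commute (DZ K) (DG K) := by
  simpa only [commute_iff_eq, map_mul, DZ, DG] using Dmk_eq_of_rel K .zg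

theorem commute_DG_DX : Commute (DG K) (DX K) := by
  simpa only [commute_iff_eq, map_mul, DG, DX] using Dmk_eq_of_rel K .gx

theorem commute_DU_DG : Commute (DU K) (DG K) := by
  simpa only [commute_iff_eq, map_mul, DU, DG] using Dmk_eq_of_rel K .ug

theorem commute_DU_DX : Commute (DU K) (DX K) := by
  simpa only [commute_iff_eq, map_mul, DU, DX] using Dmk_eq_of_rel K .ux

theorem DZ_mul_DX : DZ K * DX K = DX K * DZ K + DX K := by
  simpa only [map_mul, map_add, DZ, DX] using Dmk_eq_of_rel K .zx

theorem DU_mul_DZ : DU K * DZ K = DZ K * DU K + DU K := by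
  simpa only [map_mul, map_add, DU, DZ] using Dmk_eq_of_rel K .uz

theorem DV_mul_DX : DV K * DX K = DX K * DV K + (1 - DG K) + DX K * DU K := by
  simpa only [map_mul, map_add, map_sub, map_one, DV, DX, DG, DU] using Dmk_eq_of_rel K .vx

theorem DV_mul_DU : DV K * DU K = DU K * DV K - (1 / 2 : K) • (DU K * DU K) := by
  simpa only [map_mul, map_sub, map_smul, DV, DU] using Dmk_eq_of_rel K .vu

theorem DV_mul_DG : DV K * DG K = DG K * DV K + DG K * DU K := by
  simpa only [map_mul, map_add, DV, DG, DU] using Dmk_eq_of_rel K .vg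

theorem DV_mul_DZ : DV K * DZ K = DZ K * DV K + DV K := by
  simpa only [map_mul, map_add, DV, DZ] using Dmk_eq_of_rel K .vz

theorem DY_mul_DX : DY K * DX K = DX K * DY K - (1 / 2 : K) • (DX K * DX K) := by
  simpa only [map_mul, map_sub, map_smul, DY, DX] using Dmk_eq_of_rel K .yx

theorem DU_mul_DY : DU K * DY K = DY K * DU K + (1 - DG K) := by
  simpa only [map_mul, map_add, map_sub, map_one, DU, DY, DG] using Dmk_eq_of_rel K .uy

theorem DG_mul_DY : DG K * DY K = DY K * DG K + DX K * DG K := by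
  simpa only [map_mul, map_add, DG, DY, DX] using Dmk_eq_of_rel K .gy

theorem DZ_mul_DY : DZ K * DY K = DY K * DZ K + DY K := by
  simpa only [map_mul, map_add, DZ, DY] using Dmk_eq_of_rel K .zy

theorem DV_mul_DY : DV K * DY K = DY K * DV K - DG K * DZ K + DY K * DU K := by
  simpa only [map_mul, map_add, map_sub, DV, DY, DG, DZ, DU] using Dmk_eq_of_rel K .vy

/-- The generator `g` as a unit. -/
noncomputable def gUnit : (D K)ˣ := ⟨DG K, DGinv K, DG_mul_DGinv K, DGinv_mul_DG K⟩

theorem commute_DGinv_of_commute_DG {a : D K} (h : Commute (DG K) a) : Commute (DGinv K) a :=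
  Commute.units_inv_left (u := gUnit K) h

theorem DV_mul_DGinv : DV K * DGinv K = DGinv K * DV K - DGinv K * DU K := by
  have conj : DGinv K * (DV K * DG K) * DGinv K =
      DGinv K * (DG K * DV K + DG K * DU K) * DGinv K := by rw [DV_mul_DG]
  have commute_DGinv_DU := commute_DGinv_of_commute_DG K (commute_DU_DG K).symm
  rw [← mul_assoc, mul_assoc, DG_mul_DGinv, mul_one, ← mul_add, ← mul_assoc, DGinv_mul_DG,
    one_mul, add_mul, ← commute_DGinv_DU.eq] at conj
  exact eq_sub_of_add_eq conj.symm

theorem DY_mul_DGinv : DY K * DGinv K = DGinv K * DY K + DGinv K * DX K := by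
  have conj : DGinv K * (DG K * DY K) * DGinv K =
      DGinv K * (DY K * DG K + DX K * DG K) * DGinv K := by rw [DG_mul_DY]
  rwa [← mul_assoc, DGinv_mul_DG, one_mul, ← add_mul, ← mul_assoc, mul_assoc, DG_mul_DGinv,
    mul_one, mul_add] at conj

end Relations

section PBW

open Algebra

variable (K : Type) [Field K]

theorem adjoin_generators :
    adjoin K {DY K, DV K, DZ K, DGinv K, DG K, DU K, DX K} = ⊤ := by
  have range_le : Dmk K '' Set.range (ι K) ⊆
      {DY K, DV K, DZ K, DGinv K, DG K, DU K, DX K} := by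
    rintro _ ⟨_, ⟨i, rfl⟩, rfl⟩
    cases i <;> simp [DY, DV, DZ, DGinv, DG, DU, DX]
  have Dmk_range : (Dmk K).range = ⊤ :=
    (AlgHom.range_eq_top _).2 (RingQuot.mkAlgHom_surjective K (JRel K))
  refine top_unique ?_
  rw [← Dmk_range, ← Algebra.map_top, ← FreeAlgebra.adjoin_range_ι, AlgHom.map_adjoin]
  exact adjoin_mono range_le

theorem toSubmodule_adjoin_DGinv_DG_DU_DX :
    Subalgebra.toSubmodule (adjoin K {DGinv K, DG K, DU K, DX K}) =
      Subalgebra.toSubmodule (adjoin K {DX K}) * Subalgebra.toSubmodule (adjoin K {DU K}) *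
        Subalgebra.toSubmodule (adjoin K {DG K}) *
        Subalgebra.toSubmodule (adjoin K {DGinv K}) := by
  have commute_DGinv : ∀ a ∈ ({DG K, DU K, DX K} : Set (D K)), Commute (DGinv K) a := by
    rintro a (rfl | rfl | rfl) <;> apply commute_DGinv_of_commute_DG
    exacts [Commute.refl _, (commute_DU_DG K).symm, commute_DG_DX K]
  have commute_DG : ∀ a ∈ ({DU K, DX K} : Set (D K)), Commute (DG K) a := by
    rintro a (rfl | rfl)
    exacts [(commute_DU_DG K).symm, commute_DG_DX K]
  have commute_DU : ∀ a ∈ ({DX K} : Set (D K)), Commute (DU K) a := by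
    rintro a rfl
    exact commute_DU_DX K
  rw [toSubmodule_adjoin_insert_of_commute commute_DGinv,
    toSubmodule_adjoin_insert_of_commute commute_DG,
    toSubmodule_adjoin_insert_of_commute commute_DU]

theorem toSubmodule_adjoin_insert_DZ :
    Subalgebra.toSubmodule (adjoin K {DZ K, DGinv K, DG K, DU K, DX K}) =
      Subalgebra.toSubmodule (adjoin K {DGinv K, DG K, DU K, DX K}) *
        Subalgebra.toSubmodule (adjoin K {DZ K}) := by
  refine toSubmodule_adjoin_insert ?_
  have mem {a : D K} (ha : a ∈ ({DGinv K, DG K, DU K, DX K} : Set (D K))) :=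
    subset_adjoin (R := K) ha
  rintro a (rfl | rfl | rfl | rfl)
  · exact ⟨DGinv K, mem (by simp), 0, zero_mem _, by
      rw [add_zero, (commute_DGinv_of_commute_DG K (commute_DZ_DG K).symm).eq]⟩
  · exact ⟨DG K, mem (by simp), 0, zero_mem _, by rw [add_zero, (commute_DZ_DG K).eq]⟩
  · exact ⟨DU K, mem (by simp), -DU K, neg_mem (mem (by simp)), by
      rw [DU_mul_DZ, add_neg_cancel_right]⟩
  · exact ⟨DX K, mem (by simp), DX K, mem (by simp), DZ_mul_DX K⟩

theorem toSubmodule_adjoin_insert_DV :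
    Subalgebra.toSubmodule (adjoin K {DV K, DZ K, DGinv K, DG K, DU K, DX K}) =
      Subalgebra.toSubmodule (adjoin K {DZ K, DGinv K, DG K, DU K, DX K}) *
        Subalgebra.toSubmodule (adjoin K {DV K}) := by
  refine toSubmodule_adjoin_insert ?_
  have mem {a : D K} (ha : a ∈ ({DZ K, DGinv K, DG K, DU K, DX K} : Set (D K))) :=
    subset_adjoin (R := K) ha
  have mem_DU : DU K ∈ adjoin K {DZ K, DGinv K, DG K, DU K, DX K} := mem (by simp)
  rintro a (rfl | rfl | rfl | rfl | rfl)
  · exact ⟨DZ K + 1, add_mem (mem (by simp)) (one_mem _), 0, zero_mem _, by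
      rw [DV_mul_DZ, add_zero, add_mul, one_mul]⟩
  · exact ⟨DGinv K, mem (by simp), -(DGinv K * DU K), neg_mem (mul_mem (mem (by simp)) mem_DU), by
      rw [DV_mul_DGinv, sub_eq_add_neg]⟩
  · exact ⟨DG K, mem (by simp), DG K * DU K, mul_mem (mem (by simp)) mem_DU, DV_mul_DG K⟩
  · exact ⟨DU K, mem_DU, -((1 / 2 : K) • (DU K * DU K)),
      neg_mem (Subalgebra.smul_mem _ (mul_mem mem_DU mem_DU) _), by
      rw [DV_mul_DU, sub_eq_add_neg]⟩
  · exact ⟨DX K, mem (by simp), 1 - DG K + DX K * DU K,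
      add_mem (sub_mem (one_mem _) (mem (by simp))) (mul_mem (mem (by simp)) mem_DU), by
      rw [DV_mul_DX, add_assoc]⟩

theorem toSubmodule_adjoin_insert_DY :
    Subalgebra.toSubmodule (adjoin K {DY K, DV K, DZ K, DGinv K, DG K, DU K, DX K}) =
      Subalgebra.toSubmodule (adjoin K {DV K, DZ K, DGinv K, DG K, DU K, DX K}) *
        Subalgebra.toSubmodule (adjoin K {DY K}) := by
  refine toSubmodule_adjoin_insert ?_
  have mem {a : D K} (ha : a ∈ ({DV K, DZ K, DGinv K, DG K, DU K, DX K} : Set (D K))) :=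
    subset_adjoin (R := K) ha
  have mem_DG : DG K ∈ adjoin K {DV K, DZ K, DGinv K, DG K, DU K, DX K} := mem (by simp)
  have mem_DX : DX K ∈ adjoin K {DV K, DZ K, DGinv K, DG K, DU K, DX K} := mem (by simp)
  rintro a (rfl | rfl | rfl | rfl | rfl | rfl)
  · exact ⟨DV K - DU K, sub_mem (mem (by simp)) (mem (by simp)), DG K * DZ K + (1 - DG K),
      add_mem (mul_mem mem_DG (mem (by simp))) (sub_mem (one_mem _) mem_DG), by
      rw [sub_mul, DV_mul_DY, DU_mul_DY]; abel⟩
  · exact ⟨DZ K - 1, sub_mem (mem (by simp)) (one_mem _), 0, zero_mem _, by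
      rw [sub_mul, DZ_mul_DY]; noncomm_ring⟩
  · exact ⟨DGinv K, mem (by simp), DGinv K * DX K, mul_mem (mem (by simp)) mem_DX, DY_mul_DGinv K⟩
  · exact ⟨DG K, mem_DG, -(DX K * DG K), neg_mem (mul_mem mem_DX mem_DG), by
      rw [DG_mul_DY, add_neg_cancel_right]⟩
  · exact ⟨DU K, mem (by simp), -(1 - DG K), neg_mem (sub_mem (one_mem _) mem_DG), by
      rw [DU_mul_DY, add_neg_cancel_right]⟩
  · exact ⟨DX K, mem_DX, -((1 / 2 : K) • (DX K * DX K)),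
      neg_mem (Subalgebra.smul_mem _ (mul_mem mem_DX mem_DX) _), by
      rw [DY_mul_DX, sub_eq_add_neg]⟩

/-- The exponents of `x`, `u`, `g`, `v` and `y` in a Poincaré–Birkhoff–Witt monomial of `D`. The
powers of `ζ` are kept apart, as the coefficients of a polynomial. -/
structure PBWIndex where
  x : ℕ
  u : ℕ
  g : ℤ
  v : ℕ
  y : ℕ

/-- The PBW monomials with exponents `i`, all powers of `ζ` taken together: `f` is sent to
`x ^ i.x * u ^ i.u * g ^ i.g * f(ζ) * v ^ i.v * y ^ i.y`. -/
noncomputable def pbw (i : PBWIndex) : Polynomial K →ₗ[K] D K :=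
  LinearMap.mulLeft K (DX K ^ i.x * DU K ^ i.u * (gUnit K ^ i.g : (D K)ˣ)) ∘ₗ
    LinearMap.mulRight K (DV K ^ i.v * DY K ^ i.y) ∘ₗ (Polynomial.aeval (DZ K)).toLinearMap

theorem pbw_apply (i : PBWIndex) (f : Polynomial K) :
    pbw K i f = DX K ^ i.x * DU K ^ i.u * (gUnit K ^ i.g : (D K)ˣ) *
      (Polynomial.aeval (DZ K) f * (DV K ^ i.v * DY K ^ i.y)) := rfl

theorem gUnit_zpow_natCast_sub (m n : ℕ) :
    ((gUnit K ^ (m - n : ℤ) : (D K)ˣ) : D K) = DG K ^ m * DGinv K ^ n := by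
  rw [zpow_sub, zpow_natCast, zpow_natCast, ← inv_pow, Units.val_mul, Units.val_pow_eq_pow_val,
    Units.val_pow_eq_pow_val]
  rfl

theorem lsum_pbw_surjective : Function.Surjective (Finsupp.lsum K (pbw K)) := by
  rw [← LinearMap.range_eq_top]
  refine top_unique ?_
  rw [← Algebra.top_toSubmodule, ← adjoin_generators, toSubmodule_adjoin_insert_DY,
    toSubmodule_adjoin_insert_DV, toSubmodule_adjoin_insert_DZ, toSubmodule_adjoin_DGinv_DG_DU_DX]
  simp only [toSubmodule_adjoin_singleton, Submodule.span_mul_span]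
  rw [Submodule.span_le]
  rintro _ ⟨_, ⟨_, ⟨_, ⟨_, ⟨_, ⟨_, ⟨a, rfl⟩, _, ⟨b, rfl⟩, rfl⟩, _, ⟨m, rfl⟩, rfl⟩,
    _, ⟨n, rfl⟩, rfl⟩, _, ⟨e, rfl⟩, rfl⟩, _, ⟨l, rfl⟩, rfl⟩, _, ⟨j, rfl⟩, rfl⟩
  refine ⟨Finsupp.single ⟨a, b, m - n, l, j⟩ (Polynomial.X ^ e), ?_⟩
  simp only [Finsupp.lsum_single, pbw_apply, gUnit_zpow_natCast_sub, Polynomial.aeval_X_pow,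
    mul_assoc]

end PBW

section Faithful

open AddMonoidAlgebra

variable (K : Type) [Field K]

/-- The filtration weight of a monomial: `q` has weight `1` and `s` has weight `2`. -/
def weight : Exponent →+ ℕ where
  toFun i := i.2.2.1 + 2 * i.2.2.2
  map_zero' := rfl
  map_add' i j := by simp only [Prod.snd_add, Prod.fst_add]; ring

theorem weight_apply (i : Exponent) : weight i = i.2.2.1 + 2 * i.2.2.2 := rfl

theorem hasLeadingTerm_action_u :
    HasLeadingTerm weight (action K .u) (-1, 0, 1, 0) fun _ ↦ 1 := fun ⟨a, b, c, d⟩ ↦ by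
  set lower := supported K K {j | weight j < weight ((-1, 0, 1, 0) + (a, b, c, d))}
  have lower_mem (b' : ℤ) : single (-1 + a, b', c, d) (1 : K) ∈ lower :=
    single_mem_supported (by simp [weight_apply, add_comm]) 1
  have remainder : action K .u (single (a, b, c, d) 1) - single (-1 + a, b, 1 + c, d) 1 =
      (-2 : K) • single (-1 + a, b, c, d) 1 + (-2 : K) • single (-1 + a, 1 + b, c, d) 1 := by
    simp only [action, Module.End.mul_apply, LinearMap.sub_apply, Module.End.ofNat_apply,
      shift_single, Prod.mk_add_mk, zero_add]
    module
  simp only [Prod.mk_add_mk, zero_add, remainder]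
  exact add_mem (Submodule.smul_mem _ _ (lower_mem _)) (Submodule.smul_mem _ _ (lower_mem _))

theorem hasLeadingTerm_action_v :
    HasLeadingTerm weight (action K .v) (-1, 0, 0, 1) fun _ ↦ 1 := fun ⟨a, b, c, d⟩ ↦ by
  set lower := supported K K {j | weight j < weight ((-1, 0, 0, 1) + (a, b, c, d))}
  have lower_mem (b' : ℤ) {c' : ℕ} (hc : c' ≤ c + 1) : single (-1 + a, b', c', d) (1 : K) ∈ lower :=
    single_mem_supported (by simp only [Set.mem_ofPred_eq, weight_apply, Prod.mk_add_mk]; lia) 1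
  set e := eulerDegree K (a, b, c, d)
  have remainder : action K .v (single (a, b, c, d) 1) - single (-1 + a, b, c, 1 + d) 1 =
      (1 / 2 * (e + a)) • single (-1 + a, b, 1 + c, d) 1 +
        (2 - e) • single (-1 + a, b, c, d) 1 +
        (2 - e - 2 * a) • single (-1 + a, 1 + b, c, d) 1 := by
    simp only [action, map_add, map_sub, map_smul, map_nsmul, Module.End.mul_apply,
      LinearMap.add_apply, LinearMap.sub_apply, LinearMap.smul_apply, Module.End.ofNat_apply,
      shift_single, weightDerivation_single_one, xDegree_apply, Prod.mk_add_mk, zero_add]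
    module
  simp only [Prod.mk_add_mk, zero_add, remainder]
  exact add_mem (add_mem (Submodule.smul_mem _ _ (lower_mem _ (by lia)))
    (Submodule.smul_mem _ _ (lower_mem _ (by lia))))
    (Submodule.smul_mem _ _ (lower_mem _ (by lia)))

theorem hasLeadingTerm_action_y :
    HasLeadingTerm weight (action K .y) (1, 0, 0, 0) fun i ↦ -(1 / 2) * eulerDegree K i :=
  fun i ↦ by
  rw [action, LinearMap.smul_apply, Module.End.mul_apply, weightDerivation_single_one, map_smul,
    shift_single, smul_smul, smul_single, smul_eq_mul, mul_one, sub_self]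
  exact zero_mem _

/-- The exponent of the leading monomial of a PBW monomial. -/
def PBWIndex.leadingExponent (i : PBWIndex) : Exponent := (i.x + i.y - i.u - i.v, i.g, i.u, i.v)

variable [CharZero K]

theorem rep_gUnit_zpow (n : ℤ) : rep K (gUnit K ^ n : (D K)ˣ) = shift K (0, n, 0, 0) := by
  rw [← Int.toNat_sub_toNat_neg n, gUnit_zpow_natCast_sub, map_mul, map_pow, map_pow, DG, DGinv,
    rep_Dmk_ι, rep_Dmk_ι, action, action, shift_pow, shift_pow, shift_mul_shift]
  simp [sub_eq_add_neg]

theorem hasLeadingTerm_rep_pbw (i : PBWIndex) (f : Polynomial K) :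
    HasLeadingTerm weight (rep K (pbw K i f)) i.leadingExponent fun p ↦
      f.eval (xDegree K p + i.y - i.v) *
        ∏ t ∈ Finset.range i.y, (-(1 / 2) * (eulerDegree K p + t)) := by
  have xDegree_eq (p : Exponent) :
      xDegree K (i.v • (-1, 0, 0, 1) + i.y • (1, 0, 0, 0) + p) = xDegree K p + i.y - i.v := by
    simp only [map_add, Prod.smul_mk, Prod.mk_add_mk, xDegree_apply, nsmul_eq_mul]
    push_cast
    ring
  have eulerDegree_eq (t : ℕ) (p : Exponent) :
      eulerDegree K (t • (1, 0, 0, 0) + p) = eulerDegree K p + t := by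
    simp only [map_add, Prod.smul_mk, eulerDegree_apply, nsmul_eq_mul]
    push_cast
    ring
  have leadingExponent_eq : i.leadingExponent =
      i.x • (1, 0, 0, 0) + i.u • (-1, 0, 1, 0) + (0, i.g, 0, 0) +
        (0 + (i.v • (-1, 0, 0, 1) + i.y • (1, 0, 0, 0))) := by
    simp only [PBWIndex.leadingExponent, Prod.smul_mk, nsmul_eq_mul, Nat.cast_id, zero_add,
      Prod.mk_add_mk, Prod.mk.injEq]
    lia
  have leading := (((hasLeadingTerm_shift (R := K) weight (1, 0, 0, 0)).pow i.x).mul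
    ((hasLeadingTerm_action_u K).pow i.u)).mul
    (hasLeadingTerm_shift (R := K) weight (0, i.g, 0, 0)) |>.mul
    ((hasLeadingTerm_aeval_weightDerivation weight (xDegree K) f).mul
    (((hasLeadingTerm_action_v K).pow i.v).mul ((hasLeadingTerm_action_y K).pow i.y)))
  simp only [xDegree_eq, eulerDegree_eq, ← leadingExponent_eq, Finset.prod_const_one, one_mul]
    at leading
  rw [pbw_apply, DX, DU, DZ, DV, DY]
  simpa only [map_mul, map_pow, rep_gUnit_zpow, ← Polynomial.aeval_algHom_apply, rep_Dmk_ι, action]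
    using leading

/-- The key by which PBW monomials are compared: first by the weight of the leading exponent, and
among those of equal weight the ones with a smaller exponent of `y` dominate. -/
def PBWIndex.orderKey (i : PBWIndex) : ℕ ×ₗ ℕᵒᵈ :=
  toLex (weight i.leadingExponent, OrderDual.toDual i.y)

/-- A monomial of Euler degree `-n`, hence annihilated by `y ^ m` precisely for `m > n`. -/
def probe (n : ℕ) (b : ℤ) : Exponent := (-n - 2 * b, b, 0, 0)

theorem eulerDegree_probe (n : ℕ) (b : ℤ) : eulerDegree K (probe n b) = -n := by
  simp [eulerDegree_apply, probe]

theorem PBWIndex.y_lt_of_leadingExponent_eq {i j : PBWIndex} (hne : i ≠ j)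
    (hle : i.orderKey ≤ j.orderKey) (h : i.leadingExponent = j.leadingExponent) : j.y < i.y := by
  have y_le : j.y ≤ i.y := by
    simpa [PBWIndex.orderKey, h, Prod.Lex.toLex_le_toLex] using hle
  refine y_le.lt_of_ne fun hy ↦ hne ?_
  cases i; cases j
  simp only [PBWIndex.leadingExponent, Prod.mk.injEq, PBWIndex.mk.injEq] at h hy ⊢
  lia

theorem coeff_rep_pbw_probe_of_ne {i j : PBWIndex} (hne : i ≠ j) (hle : i.orderKey ≤ j.orderKey)
    (f : Polynomial K) (b : ℤ) :
    (rep K (pbw K i f) (single (probe j.y b) 1)).coeff (j.leadingExponent + probe j.y b) = 0 := by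
  have weight_le : weight i.leadingExponent ≤ weight j.leadingExponent :=
    Prod.Lex.monotone_fst _ _ hle
  rw [(hasLeadingTerm_rep_pbw K i f).coeff_apply (by simpa only [map_add] using by gcongr),
    coeff_single]
  by_cases h : i.leadingExponent = j.leadingExponent
  · have y_lt := PBWIndex.y_lt_of_leadingExponent_eq hne hle h
    rw [Finset.prod_eq_zero (Finset.mem_range.2 y_lt) (by simp [eulerDegree_probe]), mul_zero,
      Finsupp.single_zero, Finsupp.zero_apply]
  · exact Finsupp.single_eq_of_ne' fun h' ↦ h (add_right_cancel h')

theorem coeff_rep_pbw_probe_self (i : PBWIndex) (f : Polynomial K) (b : ℤ) :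
    (rep K (pbw K i f) (single (probe i.y b) 1)).coeff (i.leadingExponent + probe i.y b) =
      f.eval (-2 * b - i.v : K) * ∏ t ∈ Finset.range i.y, (-(1 / 2) * (-i.y + t) : K) := by
  rw [(hasLeadingTerm_rep_pbw K i f).coeff_apply le_rfl, coeff_single, Finsupp.single_eq_same,
    eulerDegree_probe]
  congr 2
  rw [xDegree_apply, probe]
  push_cast
  ring

theorem polynomial_eq_zero_of_coeff_rep_pbw_probe {i : PBWIndex} {f : Polynomial K}
    (h : ∀ b : ℤ,
      (rep K (pbw K i f) (single (probe i.y b) 1)).coeff (i.leadingExponent + probe i.y b) = 0) :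
    f = 0 := by
  have prod_ne_zero : ∏ t ∈ Finset.range i.y, (-(1 / 2) * (-i.y + t) : K) ≠ 0 := by
    refine Finset.prod_ne_zero_iff.2 fun t ht ↦ mul_ne_zero (by simp) ?_
    rw [neg_add_eq_sub, sub_ne_zero]
    exact_mod_cast (Finset.mem_range.1 ht).ne
  have root (b : ℤ) : f.IsRoot (-2 * b - i.v) :=
    (mul_eq_zero.1 ((coeff_rep_pbw_probe_self K i f b).symm.trans (h b))).resolve_right prod_ne_zero
  have roots_injective : Function.Injective fun b : ℤ ↦ (-2 * b - i.v : K) := fun b b' h ↦ by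
    simpa using h
  exact Polynomial.eq_zero_of_infinite_isRoot f
    ((Set.infinite_range_of_injective roots_injective).mono (Set.range_subset_iff.2 root))

theorem rep_injective : Function.Injective (rep K) := by
  rw [injective_iff_map_eq_zero]
  intro t ht
  obtain ⟨F, rfl⟩ := lsum_pbw_surjective K t
  suffices F = 0 by rw [this, map_zero]
  by_contra hF
  obtain ⟨i, hi, hmax⟩ := F.support.exists_max_image PBWIndex.orderKey
    (Finsupp.support_nonempty_iff.2 hF)
  refine Finsupp.mem_support_iff.1 hi
    (polynomial_eq_zero_of_coeff_rep_pbw_probe K (i := i) fun b ↦ ?_)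
  calc (rep K (pbw K i (F i)) (single (probe i.y b) 1)).coeff (i.leadingExponent + probe i.y b)
    _ = ∑ j ∈ F.support,
          (rep K (pbw K j (F j)) (single (probe i.y b) 1)).coeff
            (i.leadingExponent + probe i.y b) :=
      (Finset.sum_eq_single_of_mem i hi fun j hj hji ↦
        coeff_rep_pbw_probe_of_ne K hji (hmax j hj) (F j) b).symm
    _ = (rep K (Finsupp.lsum K (pbw K) F) (single (probe i.y b) 1)).coeff
          (i.leadingExponent + probe i.y b) := by
      simp only [Finsupp.coe_lsum, Finsupp.sum, map_sum, LinearMap.sum_apply, coeff_sum,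
        Finsupp.finsetSum_apply]
    _ = 0 := by rw [ht]; rfl

end Faithful

section Center

open AddMonoidAlgebra

variable (K : Type) [Field K]

/-- The exponent of the monomial `z ^ i.1 * ω ^ i.2.1 * θ ^ i.2.2`. -/
def centralExponent (i : ℕ × Fin 2 × ℕ) : Exponent :=
  (0, -(i.1 + (i.2.1 : ℕ) + i.2.2), 2 * i.1 + i.2.1, i.2.1 + 2 * i.2.2)

theorem centralExponent_injective : Function.Injective centralExponent := by
  rintro ⟨l, m, n⟩ ⟨l', m', n'⟩ h
  simp only [centralExponent, Prod.mk.injEq, Fin.ext_iff] at h ⊢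
  lia

theorem commute_shift_action {i : Exponent} (hx : xDegree K i = 0) (he : eulerDegree K i = 0)
    (j : JGen) : Commute (shift K i) (action K j) := by
  have comm_x := commute_shift_weightDerivation hx
  have comm_e := commute_shift_weightDerivation he
  have comm_two : Commute (shift K i) 2 := Commute.ofNat_right _ 2
  have comm_shift := commute_shift_shift (R := K) i
  cases j with
  | x | g | ginv => exact comm_shift _
  | zeta => exact comm_x
  | y => exact ((comm_shift _).mul_right comm_e).smul_right _
  | u =>
    exact ((comm_shift _).sub_right (comm_two.mul_right (comm_shift _))).sub_right
      (comm_two.mul_right (comm_shift _))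
  | v =>
    exact (((comm_shift _).add_right
      (((comm_shift _).mul_right (comm_e.add_right comm_x)).smul_right _)).add_right
      ((comm_shift _).mul_right (comm_two.sub_right comm_e))).add_right
      ((comm_shift _).mul_right ((comm_two.sub_right comm_e).sub_right (comm_two.mul_right comm_x)))

variable [CharZero K]

theorem mem_range_centralExponent {i : Exponent} (hx : xDegree K i = 0)
    (he : eulerDegree K i = 0) : i ∈ Set.range centralExponent := by
  obtain ⟨a, b, c, d⟩ := i
  rw [xDegree_apply] at hx
  rw [eulerDegree_apply] at he
  have ha : a = 0 := by exact_mod_cast hx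
  have hbcd : a + 2 * b + c + d = 0 := by exact_mod_cast he
  refine ⟨(c / 2, ⟨c % 2, Nat.mod_lt _ two_pos⟩, d / 2), ?_⟩
  simp only [centralExponent, Prod.mk.injEq]
  lia

theorem mem_center_of_rep_eq_shift {t : D K} {i : Exponent} (ht : rep K t = shift K i)
    (hx : xDegree K i = 0) (he : eulerDegree K i = 0) : t ∈ Subalgebra.center K (D K) := by
  have commute_generator (j : JGen) : Commute t (Dmk K (FreeAlgebra.ι K j)) := rep_injective K <| by
    rw [map_mul, map_mul, ht, rep_Dmk_ι, (commute_shift_action K hx he j).eq]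
  have adjoin_le : Algebra.adjoin K {DY K, DV K, DZ K, DGinv K, DG K, DU K, DX K} ≤
      Subalgebra.centralizer K {t} := by
    rw [Algebra.adjoin_le_iff]
    rintro _ (rfl | rfl | rfl | rfl | rfl | rfl | rfl) _ rfl <;> exact (commute_generator _).eq
  rw [adjoin_generators] at adjoin_le
  exact Subalgebra.mem_center_iff.2 fun a ↦ (adjoin_le (Algebra.mem_top (x := a)) t rfl).symm

theorem z_mem_center : z K ∈ Subalgebra.center K (D K) :=
  mem_center_of_rep_eq_shift K (rep_z K) (by simp [xDegree_apply]) (by simp [eulerDegree_apply])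

theorem ω_mem_center : ω K ∈ Subalgebra.center K (D K) :=
  mem_center_of_rep_eq_shift K (rep_ω K) (by simp [xDegree_apply])
    (by simp only [eulerDegree_apply]; norm_num)

theorem θ_mem_center : θ K ∈ Subalgebra.center K (D K) :=
  mem_center_of_rep_eq_shift K (rep_θ K) (by simp [xDegree_apply]) (by simp [eulerDegree_apply])

theorem rep_central_monomial (i : ℕ × Fin 2 × ℕ) :
    rep K (z K ^ i.1 * ω K ^ (i.2.1 : ℕ) * θ K ^ i.2.2) = shift K (centralExponent i) := by
  rw [map_mul, map_mul, map_pow, map_pow, map_pow, rep_z, rep_ω, rep_θ, shift_pow, shift_pow,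
    shift_pow, shift_mul_shift, shift_mul_shift]
  congr 1
  simp only [centralExponent, Prod.smul_mk, Prod.mk_add_mk, nsmul_eq_mul, Nat.cast_id,
    Prod.mk.injEq]
  lia

theorem commute_rep_of_mem_center {t : D K} (ht : t ∈ Subalgebra.center K (D K)) (a : D K) :
    Commute (rep K t) (rep K a) :=
  Commute.map (Subalgebra.mem_center_iff.1 ht a).symm (rep K)

theorem commute_rep_shift_of_mem_center {t : D K} (ht : t ∈ Subalgebra.center K (D K))
    (i : Exponent) : Commute (rep K t) (shift K i) := by
  have commute_x_pow (n : ℕ) : Commute (rep K t) (shift K (n, 0, 0, 0)) := by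
    simpa [DX, rep_Dmk_ι, action, shift_pow] using commute_rep_of_mem_center K ht (DX K ^ n)
  have commute_x_zpow (n : ℤ) : Commute (rep K t) (shift K (n, 0, 0, 0)) := by
    obtain ⟨n, rfl | rfl⟩ := n.eq_nat_or_neg
    · exact commute_x_pow n
    · exact commute_shift_of_add_eq_zero (commute_x_pow n) (by simp)
  have commute_g_zpow (n : ℤ) : Commute (rep K t) (shift K (0, n, 0, 0)) :=
    rep_gUnit_zpow K n ▸ commute_rep_of_mem_center K ht _
  have commute_q_pow (n : ℕ) : Commute (rep K t) (shift K (0, 0, n, 0)) := by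
    simpa [rep_q, shift_pow] using commute_rep_of_mem_center K ht (q K ^ n)
  have commute_s_pow (n : ℕ) : Commute (rep K t) (shift K (0, 0, 0, n)) := by
    simpa [rep_s, shift_pow] using commute_rep_of_mem_center K ht (s K ^ n)
  obtain ⟨a, b, c, d⟩ := i
  simpa [shift_mul_shift] using (((commute_x_zpow a).mul_right (commute_g_zpow b)).mul_right
    (commute_q_pow c)).mul_right (commute_s_pow d)

theorem commute_rep_weightDerivation_xDegree_of_mem_center {t : D K}
    (ht : t ∈ Subalgebra.center K (D K)) : Commute (rep K t) (weightDerivation (xDegree K)) := by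
  simpa only [DZ, rep_Dmk_ι, action] using commute_rep_of_mem_center K ht (DZ K)

theorem commute_rep_weightDerivation_eulerDegree_of_mem_center {t : D K}
    (ht : t ∈ Subalgebra.center K (D K)) :
    Commute (rep K t) (weightDerivation (eulerDegree K)) := by
  have euler_eq : weightDerivation (eulerDegree K) =
      shift K (-1, 0, 0, 0) * ((-2 : K) • rep K (DY K)) := by
    rw [DY, rep_Dmk_ι, action, smul_smul, mul_smul_comm, ← mul_assoc, shift_mul_shift]
    norm_num [← Prod.zero_eq_mk, shift_zero]
  rw [euler_eq]
  exact (commute_rep_shift_of_mem_center K ht _).mul_right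
    ((commute_rep_of_mem_center K ht _).smul_right _)

theorem rep_one_mem_supported_of_mem_center {t : D K} (ht : t ∈ Subalgebra.center K (D K)) :
    rep K t 1 ∈ supported K K (Set.range centralExponent) := by
  refine mem_supported'.2 fun i hi ↦ by_contra fun coeff_ne_zero ↦
    hi (mem_range_centralExponent K ?_ ?_)
  · exact (mul_eq_zero.1 (mul_coeff_map_one_of_commute
      (commute_rep_weightDerivation_xDegree_of_mem_center K ht) i)).resolve_right coeff_ne_zero
  · exact (mul_eq_zero.1 (mul_coeff_map_one_of_commute
      (commute_rep_weightDerivation_eulerDegree_of_mem_center K ht) i)).resolve_right coeff_ne_zero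

theorem center_le_adjoin : Subalgebra.center K (D K) ≤ Algebra.adjoin K {z K, ω K, θ K} := by
  intro t ht
  have rep_one_mem := rep_one_mem_supported_of_mem_center K ht
  rw [supported_eq_span_single, ← Set.range_comp] at rep_one_mem
  obtain ⟨c, hc⟩ := Finsupp.mem_span_range_iff_exists_finsupp.1 rep_one_mem
  have t_eq : t = c.sum fun i r ↦ r • (z K ^ i.1 * ω K ^ (i.2.1 : ℕ) * θ K ^ i.2.2) := by
    apply rep_injective K
    rw [eq_lmul_of_commute_shift (commute_rep_shift_of_mem_center K ht), ← hc]
    simp only [map_finsuppSum, map_smul, rep_central_monomial]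
    rfl
  rw [t_eq]
  have z_mem : z K ∈ Algebra.adjoin K {z K, ω K, θ K} := Algebra.subset_adjoin (by simp)
  have ω_mem : ω K ∈ Algebra.adjoin K {z K, ω K, θ K} := Algebra.subset_adjoin (by simp)
  have θ_mem : θ K ∈ Algebra.adjoin K {z K, ω K, θ K} := Algebra.subset_adjoin (by simp)
  exact sum_mem fun i _ ↦ Subalgebra.smul_mem _
    (mul_mem (mul_mem (pow_mem z_mem _) (pow_mem ω_mem _)) (pow_mem θ_mem _)) _

theorem center_eq_adjoin : Subalgebra.center K (D K) = Algebra.adjoin K {z K, ω K, θ K} := by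
  refine (center_le_adjoin K).antisymm (Algebra.adjoin_le ?_)
  rintro _ (rfl | rfl | rfl)
  exacts [z_mem_center K, ω_mem_center K, θ_mem_center K]

theorem z_mul_θ : z K * θ K = ω K ^ 2 := rep_injective K <| by
  rw [map_mul, map_pow, rep_z, rep_ω, rep_θ, shift_mul_shift, shift_pow]
  rfl

theorem linearIndependent_central_monomials : LinearIndependent K fun i : ℕ × Fin 2 × ℕ ↦
    z K ^ i.1 * ω K ^ (i.2.1 : ℕ) * θ K ^ i.2.2 := by
  have singles := (basis Exponent K).linearIndependent.comp _ centralExponent_injective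
  have shifts := singles.map' (Algebra.lmul K (AddMonoidAlgebra K Exponent)).toLinearMap
    (LinearMap.ker_eq_bot.2 Algebra.lmul_injective)
  have rep_eq : (rep K).toLinearMap ∘
        (fun i ↦ z K ^ i.1 * ω K ^ (i.2.1 : ℕ) * θ K ^ i.2.2) =
      (Algebra.lmul K (AddMonoidAlgebra K Exponent)).toLinearMap ∘
        basis Exponent K ∘ centralExponent :=
    funext (rep_central_monomial K)
  exact LinearIndependent.of_comp (rep K).toLinearMap (rep_eq ▸ shifts)

/-- The polynomial presentation of the center: `X 0`, `X 1`, `X 2` are sent to `z`, `ω`, `θ`. -/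
noncomputable def toCenter : MvPolynomial (Fin 3) K →ₐ[K] Subalgebra.center K (D K) :=
  MvPolynomial.aeval ![⟨z K, z_mem_center K⟩, ⟨ω K, ω_mem_center K⟩, ⟨θ K, θ_mem_center K⟩]

theorem toCenter_surjective : Function.Surjective (toCenter K) := by
  have adjoin_le : Algebra.adjoin K {z K, ω K, θ K} ≤
      ((Subalgebra.center K (D K)).val.comp (toCenter K)).range := by
    rw [Algebra.adjoin_le_iff]
    rintro _ (rfl | rfl | rfl)
    exacts [⟨MvPolynomial.X 0, by simp [toCenter]⟩, ⟨MvPolynomial.X 1, by simp [toCenter]⟩,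
      ⟨MvPolynomial.X 2, by simp [toCenter]⟩]
  intro t
  obtain ⟨p, hp⟩ := adjoin_le (center_le_adjoin K t.2)
  exact ⟨p, Subtype.ext hp⟩

open MvPolynomial in
theorem ker_toCenter : RingHom.ker (toCenter K) =
    Ideal.span {(X 0 : MvPolynomial (Fin 3) K) * X 2 - X 1 ^ 2} :=
  ker_aeval_eq_span_quadric (Subtype.ext (z_mul_θ K)) <|
    LinearIndependent.of_comp (Subalgebra.center K (D K)).val.toLinearMap
      (linearIndependent_central_monomials K)

end Center

end JordanDouble

open JordanDouble MvPolynomial in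
theorem center_of_D_general (K : Type) [Field K] [CharZero K] :
    letI q : D K := DU K * DX K + 2 + 2 * DG K
    letI z : D K := q ^ 2 * DGinv K
    letI s : D K := DX K * DV K + DU K * DY K +
      (-((1/2 : K) • (DU K * DX K)) + DG K - 1) * DZ K - 2 * (1 + DG K)
    letI ω : D K := q * DGinv K * s
    letI θ : D K := s ^ 2 * DGinv K
    Subalgebra.center K (D K) = Algebra.adjoin K {z, ω, θ} ∧
    Nonempty
      ((MvPolynomial (Fin 3) K ⧸
          Ideal.span {(X 0 : MvPolynomial (Fin 3) K) * X 2 - X 1 ^ 2}) ≃ₐ[K]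
        Subalgebra.center K (D K)) :=
  ⟨center_eq_adjoin K, ⟨(Ideal.quotientEquivAlgOfEq K (ker_toCenter K).symm).trans
    (Ideal.quotientKerAlgEquivOfSurjective (toCenter_surjective K))⟩⟩

open MvPolynomial in
/-- with `q = ux + 2 + 2g`, `z = q²g⁻¹`, `s = xv + uy + (−(1/2)ux + g − 1)ζ −
2(1+g)`, `ω = qg⁻¹s` and `θ = s²g⁻¹`, the center of `D` is the `k`-subalgebra generated by
`z`, `ω`, `θ`, and it is isomorphic as a `k`-algebra to `k[X,Y,Z]/(XZ − Y²)`. -/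
theorem center_of_D :
    letI q : D k := DU k * DX k + 2 + 2 * DG k
    letI z : D k := q ^ 2 * DGinv k
    letI s : D k := DX k * DV k + DU k * DY k +
      (-((1/2 : k) • (DU k * DX k)) + DG k - 1) * DZ k - 2 * (1 + DG k)
    letI ω : D k := q * DGinv k * s
    letI θ : D k := s ^ 2 * DGinv k
    Subalgebra.center k (D k) = Algebra.adjoin k {z, ω, θ} ∧
    Nonempty
      ((MvPolynomial (Fin 3) k ⧸
          Ideal.span {(X 0 : MvPolynomial (Fin 3) k) * X 2 - X 1 ^ 2}) ≃ₐ[k]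
        Subalgebra.center k (D k)) :=
  center_of_D_general k
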